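/- Let X = (X₁,...,X_m) be an ℝ^m-valued random field on T = [0,∞)^d that is continuous in probability and such that X_j(t) is not almost surely constant for every j and every t ∈ (0,∞)^d. Suppose an ℝ^m-valued random field Y on T belongs to the diagonal domain of attraction of X with normalizing function f = (f₁,...,f_m) : (0,∞)^d → (0,∞)^m, i.e. for all k and all t₁,...,t_k ∈ T, the random vectors (Y₁(a·t₁)/f₁(a),...,Y_m(a·t₁)/f_m(a),...,Y₁(a·t_k)/f₁(a),...,Y_m(a·t_k)/f_m(a)) converge in distribution to (X(t₁),...,X(t_k)) as a → ∞ (meaning min_i a_i → ∞). Then there exist nonnegative reals H_i^{(j)} and coordinate-wise slowly varying functions L_j such that f_j(a) = (∏_{i=1}^d a_i^{H_i^{(j)}})·L_j(a), and X is multi-self-similar: for every a ∈ (0,∞)^d, {X(a·t), t ∈ T} =_{f.d.d.} {(∏_i a_i^{H_i^{(1)}}·X₁(t),...,∏_i a_i^{H_i^{(m)}}·X_m(t)), t ∈ T}. -/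

import Mathlib

open MeasureTheory Filter Topology

lemma exists_pos_measure_lt_abs_ne_zero {Ω : Type*} [MeasurableSpace Ω] {ν : Measure Ω}
    {Z : Ω → ℝ} (hZ : ¬ ∀ᵐ ω ∂ν, Z ω = 0) :
    ∃ δ : ℝ, 0 < δ ∧ ν {ω | δ < |Z ω|} ≠ 0 := by
  by_contra! h
  apply hZ
  have h' : ∀ n : ℕ, ∀ᵐ ω ∂ν, |Z ω| ≤ 1 / ((n : ℝ) + 1) := fun n => by
    have := h (1 / ((n : ℝ) + 1)) (by positivity)
    rw [ae_iff]
    simpa only [not_le] using this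
  filter_upwards [ae_all_iff.2 h'] with ω hω
  have := ge_of_tendsto' tendsto_one_div_add_atTop_nhds_zero_nat hω
  exact abs_eq_zero.1 (le_antisymm this (abs_nonneg _))

section ScaleConvergence

variable {ι Ω Ω' Ω'' : Type*} [MeasurableSpace Ω] [MeasurableSpace Ω'] [MeasurableSpace Ω'']
  {μ : Measure Ω} [IsProbabilityMeasure μ] {ν : Measure Ω'} [IsProbabilityMeasure ν]
  {ν' : Measure Ω''} [IsProbabilityMeasure ν'] {l : Filter ι}

/-- Convergence in distribution only depends on the laws, eventually along the filter. -/
lemma MeasureTheory.TendstoInDistribution.congr_map {E : Type*} [TopologicalSpace E]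
    [MeasurableSpace E] [OpensMeasurableSpace E] {U V : ι → Ω → E} {Z : Ω' → E}
    (h : TendstoInDistribution V l Z (fun _ => μ) ν) (hU : ∀ i, AEMeasurable (U i) μ)
    (hUV : ∀ᶠ i in l, μ.map (U i) = μ.map (V i)) :
    TendstoInDistribution U l Z (fun _ => μ) ν where
  forall_aemeasurable := hU
  aemeasurable_limit := h.aemeasurable_limit
  tendsto := by
    refine h.tendsto.congr' ?_
    filter_upwards [hUV] with i hi
    exact Subtype.ext hi.symm

lemma MeasureTheory.TendstoInDistribution.comp_tendsto {κ E : Type*} [TopologicalSpace E]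
    [MeasurableSpace E] [OpensMeasurableSpace E] {V : ι → Ω → E} {Z : Ω' → E} {l' : Filter κ}
    (h : TendstoInDistribution V l Z (fun _ => μ) ν) {u : κ → ι} (hu : Tendsto u l' l) :
    TendstoInDistribution (fun k => V (u k)) l' Z (fun _ => μ) ν :=
  ⟨fun k => h.forall_aemeasurable (u k), h.aemeasurable_limit, h.tendsto.comp hu⟩

/-- Multiplying by deterministic factors that converge preserves convergence in distribution. -/
lemma MeasureTheory.TendstoInDistribution.const_mul_of_tendsto [l.IsCountablyGenerated]
    {E : Type*} [SeminormedAddCommGroup E] [SecondCountableTopology E] [Mul E] [ContinuousMul E]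
    [MeasurableSpace E] [BorelSpace E] {U V : ι → Ω → E} {Z : Ω' → E} {r : ι → E} {c : E}
    (hV : TendstoInDistribution V l Z (fun _ => μ) ν) (hU : ∀ i, AEMeasurable (U i) μ)
    (hUV : ∀ᶠ i in l, ∀ ω, U i ω = r i * V i ω) (hr : Tendsto r l (𝓝 c)) :
    TendstoInDistribution U l (fun ω => c * Z ω) (fun _ => μ) ν := by
  have hm : TendstoInMeasure μ (fun i (_ : Ω) => r i) l (fun _ => c) := by
    intro ε hε
    refine tendsto_const_nhds.congr' ?_
    filter_upwards [(tendsto_iff_edist_tendsto_0.1 hr).eventually_lt_const hε] with i hi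
    simp [not_le.2 hi]
  refine (hV.continuous_comp_prodMk_of_tendstoInMeasure_const
    (g := fun p : E × E => p.2 * p.1) (by fun_prop) hm
    (fun i => aemeasurable_const)).congr_map hU ?_
  filter_upwards [hUV] with i hi
  rw [show U i = fun ω => r i * V i ω from funext hi]

lemma exists_measure_le_abs_lt {W : Ω'' → ℝ} (hW : AEMeasurable W ν') {ε : ENNReal}
    (hε : ε ≠ 0) : ∃ M : ℝ, ν'.map W {x | M ≤ |x|} < ε := by
  have : IsProbabilityMeasure (ν'.map W) := Measure.isProbabilityMeasure_map hW
  have h := tendsto_measure_iInter_atTop (μ := ν'.map W) (s := fun n : ℕ => {x : ℝ | (n : ℝ) ≤ |x|})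
    (fun n => (measurableSet_le measurable_const measurable_norm).nullMeasurableSet)
    (fun a b hab x (hx : (b : ℝ) ≤ |x|) => le_trans (Nat.cast_le.2 hab) hx) ⟨0, measure_ne_top _ _⟩
  have he : (⋂ n : ℕ, {x : ℝ | (n : ℝ) ≤ |x|}) = ∅ := by
    ext x
    obtain ⟨n, hn⟩ := exists_nat_gt |x|
    simpa using ⟨n, hn⟩
  rw [he, measure_empty] at h
  obtain ⟨n, hn⟩ := (h.eventually_lt_const (pos_iff_ne_zero.2 hε)).exists
  exact ⟨n, hn⟩

/-- If `V i` converges in distribution to a limit that does not vanish and `r i * V i` converges in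
distribution, then the scaling factors `r i` are eventually bounded. -/
lemma MeasureTheory.TendstoInDistribution.eventually_abs_le {U V : ι → Ω → ℝ} {Z : Ω' → ℝ}
    {W : Ω'' → ℝ} {r : ι → ℝ} (hV : TendstoInDistribution V l Z (fun _ => μ) ν)
    (hU : TendstoInDistribution U l W (fun _ => μ) ν')
    (hUV : ∀ᶠ i in l, ∀ ω, U i ω = r i * V i ω) (hZ : ¬ ∀ᵐ ω ∂ν, Z ω = 0) :
    ∃ M, ∀ᶠ i in l, |r i| ≤ M := by
  obtain ⟨δ, hδ, hδZ⟩ := exists_pos_measure_lt_abs_ne_zero hZ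
  obtain ⟨M, hM⟩ := exists_measure_le_abs_lt hU.aemeasurable_limit hδZ
  obtain ⟨q, hq, hq'⟩ := exists_between hM
  have hopen : IsOpen {x : ℝ | δ < |x|} := isOpen_lt continuous_const continuous_abs
  have hclosed : IsClosed {x : ℝ | M ≤ |x|} := isClosed_le continuous_const continuous_abs
  have h1 := ProbabilityMeasure.le_liminf_measure_open_of_tendsto hV.tendsto hopen
  have h2 := ProbabilityMeasure.limsup_measure_closed_le_of_tendsto hU.tendsto hclosed
  simp only [ProbabilityMeasure.coe_mk] at h1 h2
  rw [Measure.map_apply_of_aemeasurable hV.aemeasurable_limit hopen.measurableSet] at h1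
  have e1 := eventually_lt_of_lt_liminf (hq'.trans_le h1)
  have e2 := eventually_lt_of_limsup_lt (h2.trans_lt hq)
  refine ⟨M / δ, ?_⟩
  filter_upwards [e1, e2, hUV] with i h1 h2 h3
  rw [Measure.map_apply_of_aemeasurable (hV.forall_aemeasurable i) hopen.measurableSet] at h1
  rw [Measure.map_apply_of_aemeasurable (hU.forall_aemeasurable i) hclosed.measurableSet] at h2
  by_contra! hr
  refine absurd (h1.trans_le (measure_mono fun ω hω => ?_)) (not_lt.2 h2.le)
  simp only [Set.mem_preimage, Set.mem_ofPred_eq] at hω ⊢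
  rw [h3, abs_mul]
  rw [div_lt_iff₀ hδ] at hr
  exact hr.le.trans (mul_le_mul_of_nonneg_left hω.le (abs_nonneg _))

/-- A nonzero random variable determines the positive scale of its multiples. -/
lemma eq_of_map_const_mul_eq {Z : Ω' → ℝ} (hZm : AEMeasurable Z ν) (hZ : ¬ ∀ᵐ ω ∂ν, Z ω = 0)
    {b c : ℝ} (hb : 0 < b) (hc : 0 < c)
    (h : ν.map (fun ω => b * Z ω) = ν.map (fun ω => c * Z ω)) : b = c := by
  by_contra hne
  wlog hbc : b < c generalizing b c
  · exact this hc hb h.symm (Ne.symm hne) (lt_of_le_of_ne (not_lt.1 hbc) (Ne.symm hne))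
  have hmap : ∀ (x : ℝ) (V : Ω' → ℝ), AEMeasurable V ν →
      ν.map (fun ω => x * V ω) = (ν.map V).map (fun y => x * y) := fun x V hV =>
    (AEMeasurable.map_map_of_aemeasurable (by fun_prop) hV).symm
  have hstep : ν.map (fun ω => c / b * Z ω) = ν.map Z := by
    have h1 := congrArg (Measure.map (fun y : ℝ => b⁻¹ * y)) h
    rw [← hmap _ _ (by fun_prop), ← hmap _ _ (by fun_prop)] at h1
    calc ν.map (fun ω => c / b * Z ω) = ν.map (fun ω => b⁻¹ * (c * Z ω)) := by
          congr 1; ext ω; ring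
      _ = ν.map (fun ω => b⁻¹ * (b * Z ω)) := h1.symm
      _ = ν.map Z := by congr 1; ext ω; field_simp
  have hpow : ∀ n : ℕ, ν.map (fun ω => (c / b) ^ n * Z ω) = ν.map Z := by
    intro n
    induction n with
    | zero => simp
    | succ n ih =>
      calc ν.map (fun ω => (c / b) ^ (n + 1) * Z ω)
          = ν.map (fun ω => c / b * ((c / b) ^ n * Z ω)) := by congr 1; ext ω; ring
        _ = ν.map Z := by rw [hmap _ _ (by fun_prop), ih, ← hmap _ _ hZm, hstep]
  have hV : TendstoInDistribution (fun _ : ℕ => Z) atTop Z (fun _ => ν) ν :=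
    tendstoInDistribution_const hZm
  obtain ⟨M, hM⟩ := hV.eventually_abs_le (r := fun n => (c / b) ^ n)
    (hV.congr_map (fun n => by fun_prop) (.of_forall hpow)) (.of_forall fun _ _ => rfl) hZ
  have hlim := tendsto_pow_atTop_atTop_of_one_lt ((one_lt_div hb).2 hbc)
  obtain ⟨n, hn, hn'⟩ := (hM.and (hlim.eventually_gt_atTop M)).exists
  exact absurd (le_abs_self _) (not_le.2 (hn.trans_lt hn'))

/-- Convergence of types for pure scalings: if `V i` and `r i * V i` converge in distribution to
limits that do not vanish, then the positive scaling factors `r i` converge. -/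
lemma MeasureTheory.TendstoInDistribution.exists_tendsto_scale [l.IsCountablyGenerated] [l.NeBot]
    {U V : ι → Ω → ℝ} {Z : Ω' → ℝ} {W : Ω'' → ℝ} {r : ι → ℝ}
    (hV : TendstoInDistribution V l Z (fun _ => μ) ν)
    (hU : TendstoInDistribution U l W (fun _ => μ) ν')
    (hr : ∀ᶠ i in l, 0 < r i) (hUV : ∀ᶠ i in l, ∀ ω, U i ω = r i * V i ω)
    (hZ : ¬ ∀ᵐ ω ∂ν, Z ω = 0) (hW : ¬ ∀ᵐ ω ∂ν', W ω = 0) :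
    ∃ c, 0 < c ∧ Tendsto r l (𝓝 c) ∧ ν'.map W = ν.map (fun ω => c * Z ω) := by
  obtain ⟨M, hM⟩ := hV.eventually_abs_le hU hUV hZ
  obtain ⟨N, hN⟩ := hU.eventually_abs_le (r := fun i => (r i)⁻¹) hV (by
    filter_upwards [hr, hUV] with i hi h ω
    rw [h, inv_mul_cancel_left₀ hi.ne']) hW
  have hmem : ∀ᶠ i in l, 0 < N ∧ r i ∈ Set.Icc N⁻¹ M := by
    filter_upwards [hr, hM, hN] with i hi h1 h2
    rw [abs_of_pos hi] at h1
    rw [abs_of_pos (inv_pos.2 hi)] at h2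
    exact ⟨(inv_pos.2 hi).trans_le h2, inv_le_of_inv_le₀ hi h2, h1⟩
  obtain ⟨i₀, hN0, -⟩ := hmem.exists
  have key : ∀ u : ℕ → ι, Tendsto u atTop l → ∃ c, 0 < c ∧
      (∃ s : ℕ → ℕ, Tendsto (fun n => r (u (s n))) atTop (𝓝 c)) ∧
        ν'.map W = ν.map (fun ω => c * Z ω) := by
    intro u hu
    obtain ⟨c, hc, s, hs, hlim⟩ := isCompact_Icc.tendsto_subseq'
      (x := fun n => r (u n)) ((hu.eventually hmem).mono fun n hn => hn.2).frequently
    have hus : Tendsto (fun n => u (s n)) atTop l := hu.comp hs.tendsto_atTop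
    have hU' := hU.comp_tendsto hus
    refine ⟨c, (inv_pos.2 hN0).trans_le hc.1, ⟨s, hlim⟩, ?_⟩
    exact tendstoInDistribution_unique _ hU' ((hV.comp_tendsto hus).const_mul_of_tendsto
      hU'.forall_aemeasurable (hus.eventually hUV) hlim)
  obtain ⟨u, hu⟩ := l.exists_seq_tendsto
  obtain ⟨c, hc, -, hcW⟩ := key u hu
  refine ⟨c, hc, tendsto_of_subseq_tendsto fun u hu => ?_, hcW⟩
  obtain ⟨b, hb, ⟨s, hs⟩, hbW⟩ := key u hu
  rw [eq_of_map_const_mul_eq hV.aemeasurable_limit hZ hc hb (hcW.symm.trans hbW)]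
  exact ⟨s, hs⟩

end ScaleConvergence

section Orthant

variable {d : ℕ}

lemma isCountablyGenerated_atTop_pi_real : (atTop : Filter (Fin d → ℝ)).IsCountablyGenerated := by
  refine isCountablyGenerated_of_seq ⟨fun n => Set.Ici fun _ => (n : ℝ), le_antisymm ?_ ?_⟩
  · exact le_iInf fun n => le_principal_iff.2 (mem_atTop _)
  · refine le_iInf fun b => ?_
    obtain ⟨n, hn⟩ := exists_nat_ge (∑ i, |b i|)
    refine (iInf_le _ n).trans (principal_mono.2 fun x hx i => ?_)
    calc b i ≤ |b i| := le_abs_self _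
      _ ≤ ∑ i, |b i| := Finset.single_le_sum (fun i _ => abs_nonneg (b i)) (Finset.mem_univ i)
      _ ≤ n := hn
      _ ≤ x i := hx i

lemma eventually_atTop_pi_pos : ∀ᶠ a : Fin d → ℝ in atTop, ∀ i, 0 < a i := by
  filter_upwards [eventually_ge_atTop (1 : Fin d → ℝ)] with a ha i
  exact one_pos.trans_le (ha i)

lemma tendsto_mul_right_atTop_pi {x : Fin d → ℝ} (hx : ∀ i, 0 < x i) :
    Tendsto (fun a : Fin d → ℝ => a * x) atTop atTop := by
  refine tendsto_atTop.2 fun b => ?_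
  filter_upwards [eventually_ge_atTop (b / x)] with a ha i
  exact (div_le_iff₀ (hx i)).1 (ha i)

lemma AddMonoidHom.apply_eq_sum_of_continuous (G : (Fin d → ℝ) →+ ℝ) (hG : Continuous G)
    (u : Fin d → ℝ) : G u = ∑ i, u i * G (Pi.single i 1) := by
  have h := (G.toRealLinearMap hG).toLinearMap.pi_apply_eq_sum_univ u
  simp only [smul_eq_mul] at h
  refine h.trans (Finset.sum_congr rfl fun i _ => ?_)
  have hi : (fun k => if i = k then 1 else 0 : Fin d → ℝ) = Pi.single i 1 := by
    ext k
    simp [Pi.single_apply, eq_comm]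
  rw [hi]
  rfl

end Orthant

/-- Let `X` be an `ℝ^m`-valued random field on `T = [0,∞)^d`,
continuous in probability, with `X_j(t)` not a.s. constant for every `j` and
every `t ∈ (0,∞)^d`. Suppose `Y` belongs to the diagonal domain of attraction of
`X` with normalizing function `f = (f₁,...,f_m) : (0,∞)^d → (0,∞)^m`, i.e. the
finite-dimensional distributions of `(Y_j(a·t)/f_j(a))_j` converge weakly to those
of `X` as `a → ∞` (`min_i a_i → ∞`). Then `f_j(a) = (∏_i a_i^{H_i^{(j)}})·L_j(a)`
with nonnegative reals `H_i^{(j)}` and coordinate-wise slowly varying `L_j`, and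
`X` is multi-self-similar with exponents `H`. -/
theorem stmt_14 {d m : ℕ} {Ω Ω' : Type*} [MeasurableSpace Ω] [MeasurableSpace Ω']
    (P : Measure Ω) [IsProbabilityMeasure P]
    (P' : Measure Ω') [IsProbabilityMeasure P']
    (X : (Fin d → ℝ) → Ω → (Fin m → ℝ))
    (Y : (Fin d → ℝ) → Ω' → (Fin m → ℝ))
    (hXmeas : ∀ t, Measurable (X t))
    (hYmeas : ∀ t, Measurable (Y t))
    -- `X` is continuous in probability on `[0,∞)^d`
    (hXcont : ∀ t : Fin d → ℝ, (∀ i, 0 ≤ t i) →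
      ∀ u : ℕ → Fin d → ℝ, (∀ n i, 0 ≤ u n i) → Tendsto u atTop (𝓝 t) →
        TendstoInMeasure P (fun n => X (u n)) atTop (X t))
    -- `X_j(t)` is not a.s. constant for `t ∈ (0,∞)^d`
    (hXnd : ∀ (j : Fin m) (t : Fin d → ℝ), (∀ i, 0 < t i) →
      ¬ ∃ c : ℝ, ∀ᵐ ω ∂P, X t ω j = c)
    (f : (Fin d → ℝ) → Fin m → ℝ)
    (hfpos : ∀ a : Fin d → ℝ, (∀ i, 0 < a i) → ∀ j, 0 < f a j)
    -- convergence of finite-dimensional distributions as `a → ∞`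
    (hconv : ∀ (k : ℕ) (t : Fin k → Fin d → ℝ), (∀ i i', 0 ≤ t i i') →
      ∀ φ : BoundedContinuousFunction (Fin k → Fin m → ℝ) ℝ,
        Tendsto (fun a : Fin d → ℝ =>
            ∫ ω, φ (fun i => fun j => Y (a * t i) ω j / f a j) ∂P')
          atTop (𝓝 (∫ ω, φ (fun i => X (t i) ω) ∂P))) :
    ∃ (H : Fin m → Fin d → ℝ) (L : Fin m → (Fin d → ℝ) → ℝ),
      (∀ j i, 0 ≤ H j i) ∧
      (∀ (j : Fin m) (a : Fin d → ℝ), (∀ i, 0 < a i) → 0 < L j a) ∧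
      -- each `L j` is coordinate-wise slowly varying
      (∀ (j : Fin m) (x : Fin d → ℝ), (∀ i, 0 < x i) →
        Tendsto (fun a : Fin d → ℝ => L j (a * x) / L j a) atTop (𝓝 1)) ∧
      (∀ a : Fin d → ℝ, (∀ i, 0 < a i) → ∀ j,
        f a j = (∏ i, a i ^ H j i) * L j a) ∧
      -- `X` is multi-self-similar
      (∀ a : Fin d → ℝ, (∀ i, 0 < a i) →
        ∀ (k : ℕ) (t : Fin k → Fin d → ℝ), (∀ i i', 0 ≤ t i i') →
          Measure.map (fun ω => fun i => X (a * t i) ω) P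
            = Measure.map
                (fun ω => fun i => fun j => (∏ i', a i' ^ H j i') * X (t i) ω j) P) := by
  have : (atTop : Filter (Fin d → ℝ)).IsCountablyGenerated := isCountablyGenerated_atTop_pi_real
  -- weak convergence of the finite-dimensional distributions and of the single coordinates
  have hD : ∀ (k : ℕ) (t : Fin k → Fin d → ℝ), (∀ i i', 0 ≤ t i i') →
      TendstoInDistribution (fun (a : Fin d → ℝ) ω i j => Y (a * t i) ω j / f a j) atTop
        (fun ω i => X (t i) ω) (fun _ => P') P := by
    intro k t ht
    have hm : ∀ a : Fin d → ℝ,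
        AEMeasurable (fun ω i j => Y (a * t i) ω j / f a j : Ω' → Fin k → Fin m → ℝ) P' :=
      fun a => Measurable.aemeasurable <| measurable_pi_lambda _ fun i =>
        measurable_pi_lambda _ fun j => ((measurable_pi_apply j).comp (hYmeas _)).div_const _
    have hm' : AEMeasurable (fun ω i => X (t i) ω) P :=
      (measurable_pi_lambda _ fun i => hXmeas _).aemeasurable
    refine ⟨hm, hm', ProbabilityMeasure.tendsto_iff_forall_integral_tendsto.2 fun φ => ?_⟩
    simp only [ProbabilityMeasure.coe_mk]
    rw [integral_map hm' φ.continuous.aestronglyMeasurable]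
    simp_rw [fun a => integral_map (hm a) φ.continuous.aestronglyMeasurable]
    exact hconv k t ht φ
  have hD1 : ∀ (j : Fin m) (t : Fin d → ℝ), (∀ i, 0 ≤ t i) →
      TendstoInDistribution (fun (a : Fin d → ℝ) ω => Y (a * t) ω j / f a j) atTop
        (fun ω => X t ω j) (fun _ => P') P := fun j t ht =>
    (hD 1 (fun _ => t) fun _ => ht).continuous_comp
      (g := fun y : Fin 1 → Fin m → ℝ => y 0 j) (by fun_prop)
  have hX0 : ∀ (j : Fin m) (t : Fin d → ℝ), (∀ i, 0 < t i) → ¬ ∀ᵐ ω ∂P, X t ω j = 0 :=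
    fun j t ht h => hXnd j t ht ⟨0, h⟩
  have hXm : ∀ (t : Fin d → ℝ) (j : Fin m), AEMeasurable (fun ω => X t ω j) P :=
    fun t j => ((measurable_pi_apply j).comp (hXmeas t)).aemeasurable
  -- the normalizing functions have scaling limits, written in logarithmic coordinates
  let e : (Fin d → ℝ) → Fin d → ℝ := fun u i => Real.exp (u i)
  have he : ∀ u i, 0 < e u i := fun u i => Real.exp_pos _
  have he_cont : Continuous e := by fun_prop
  have he_add : ∀ u v, e (u + v) = e u * e v := fun u v => funext fun i => Real.exp_add _ _
  have hcancel : ∀ (u : Fin d → ℝ) (j : Fin m), ∀ᶠ a : Fin d → ℝ in atTop, ∀ y : ℝ,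
      y / f a j = f (a * e u) j / f a j * (y / f (a * e u) j) := by
    intro u j
    filter_upwards [(tendsto_mul_right_atTop_pi (he u)).eventually eventually_atTop_pi_pos]
      with a ha y
    have := (hfpos _ ha j).ne'
    field_simp
  have hscale : ∀ (j : Fin m) (u : Fin d → ℝ), ∃ c : ℝ, 0 < c ∧
      Tendsto (fun a : Fin d → ℝ => f (a * e u) j / f a j) atTop (𝓝 c) := by
    intro j u
    obtain ⟨c, hc, hlim, -⟩ := ((hD1 j 1 fun _ => zero_le_one).comp_tendsto
      (tendsto_mul_right_atTop_pi (he u))).exists_tendsto_scale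
      (U := fun (a : Fin d → ℝ) ω => Y (a * e u) ω j / f a j)
      (r := fun a : Fin d → ℝ => f (a * e u) j / f a j)
      (hD1 j (e u) fun i => (he u i).le)
      (by
        filter_upwards [eventually_atTop_pi_pos,
          (tendsto_mul_right_atTop_pi (he u)).eventually eventually_atTop_pi_pos] with a ha ha'
        exact div_pos (hfpos _ ha' j) (hfpos _ ha j))
      (by
        filter_upwards [hcancel u j] with a ha ω
        rw [mul_one]
        exact ha _)
      (hX0 j 1 fun _ => one_pos) (hX0 j (e u) (he u))
    exact ⟨c, hc, hlim⟩
  choose ψ hψpos hψ using hscale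
  have hψ_add : ∀ j u v, ψ j (u + v) = ψ j u * ψ j v := by
    intro j u v
    refine tendsto_nhds_unique (hψ j (u + v))
      (((hψ j v).comp (tendsto_mul_right_atTop_pi (he u))).mul (hψ j u) |>.congr' ?_ |>.trans
        (by rw [mul_comm]))
    filter_upwards [(tendsto_mul_right_atTop_pi (he u)).eventually eventually_atTop_pi_pos]
      with a ha
    have := (hfpos _ ha j).ne'
    simp only [Function.comp_apply, he_add, mul_assoc]
    rw [← mul_assoc, div_mul_div_cancel₀ this]
  -- self-similarity with the factors `ψ`
  have hss : ∀ (u : Fin d → ℝ) (k : ℕ) (t : Fin k → Fin d → ℝ), (∀ i i', 0 ≤ t i i') →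
      P.map (fun ω i => X (e u * t i) ω) = P.map (fun ω i j => ψ j u * X (t i) ω j) := by
    intro u k t ht
    have h1 := hD k (fun i => e u * t i) fun i i' => mul_nonneg (he u i').le (ht i i')
    refine tendstoInDistribution_unique _ h1 <|
      ((hD k t ht).comp_tendsto (tendsto_mul_right_atTop_pi (he u))).const_mul_of_tendsto
        (r := fun (a : Fin d → ℝ) (_ : Fin k) j => f (a * e u) j / f a j)
        (c := fun _ j => ψ j u) h1.forall_aemeasurable ?_
        (tendsto_pi_nhds.2 fun _ => tendsto_pi_nhds.2 fun j => hψ j u)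
    filter_upwards [eventually_all.2 (hcancel u)] with a ha ω
    funext i j
    simp only [Pi.mul_apply, ← mul_assoc]
    exact ha j _
  have hss1 : ∀ (j : Fin m) (u : Fin d → ℝ),
      P.map (fun ω => ψ j u * X 1 ω j) = P.map (fun ω => X (e u) ω j) := by
    intro j u
    have h := congrArg (Measure.map fun y : Fin 1 → Fin m → ℝ => y 0 j)
      (hss u 1 (fun _ => 1) fun _ _ => zero_le_one)
    have hm : Measurable fun ω (_ : Fin 1) j => ψ j u * X 1 ω j :=
      measurable_pi_lambda _ fun _ => measurable_pi_lambda _ fun j =>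
        ((measurable_pi_apply j).comp (hXmeas _)).const_mul _
    rw [Measure.map_map (by fun_prop) (measurable_pi_lambda _ fun i => hXmeas _),
      Measure.map_map (by fun_prop) hm] at h
    simpa only [Function.comp_def, mul_one] using h.symm
  have hXD : ∀ (j : Fin m) (u : ℕ → Fin d → ℝ) (t : Fin d → ℝ), (∀ i, 0 ≤ t i) →
      Tendsto (fun n => e (u n)) atTop (𝓝 t) →
      TendstoInDistribution (fun n ω => ψ j (u n) * X 1 ω j) atTop (fun ω => X t ω j)
        (fun _ => P) P := by
    intro j u t ht hu
    have h := (hXcont t ht (fun n => e (u n)) (fun n i => (he _ i).le) hu).tendstoInDistribution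
      fun n => (hXmeas _).aemeasurable
    exact (h.continuous_comp (g := fun y : Fin m → ℝ => y j) (by fun_prop)).congr_map
      (fun n => (hXm 1 j).const_mul _) (.of_forall fun n => hss1 j (u n))
  have hX1 : ∀ j : Fin m, TendstoInDistribution (fun (_ : ℕ) ω => X 1 ω j) atTop
      (fun ω => X 1 ω j) (fun _ => P) P := fun j => tendstoInDistribution_const (hXm 1 j)
  have hψ_cont : ∀ j, Continuous (ψ j) := by
    intro j
    refine continuous_iff_seqContinuous.2 fun u v hu => ?_
    obtain ⟨c, hc, hlim, hmap⟩ := (hX1 j).exists_tendsto_scale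
      (hXD j u (e v) (fun i => (he v i).le) ((he_cont.tendsto v).comp hu))
      (.of_forall fun n => hψpos j (u n)) (.of_forall fun _ _ => rfl)
      (hX0 j 1 fun _ => one_pos) (hX0 j (e v) (he v))
    rw [← hss1] at hmap
    rw [eq_of_map_const_mul_eq (hXm 1 j) (hX0 j 1 fun _ => one_pos) (hψpos j v) hc hmap]
    exact hlim
  let G : Fin m → (Fin d → ℝ) →+ ℝ := fun j =>
    AddMonoidHom.mk' (fun u => Real.log (ψ j u)) fun u v => by
      rw [hψ_add, Real.log_mul (hψpos j u).ne' (hψpos j v).ne']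
  have hG : ∀ j u, ψ j u = Real.exp (G j u) := fun j u => (Real.exp_log (hψpos j u)).symm
  have hG_cont : ∀ j, Continuous (G j) := fun j => (hψ_cont j).log fun u => (hψpos j u).ne'
  let H : Fin m → Fin d → ℝ := fun j i => G j (Pi.single i 1)
  have hprod : ∀ (j : Fin m) (a : Fin d → ℝ), (∀ i, 0 < a i) →
      ∏ i, a i ^ H j i = ψ j fun i => Real.log (a i) := by
    intro j a ha
    rw [hG, (G j).apply_eq_sum_of_continuous (hG_cont j), Real.exp_sum]
    exact Finset.prod_congr rfl fun i _ => Real.rpow_def_of_pos (ha i) _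
  have he_log : ∀ a : Fin d → ℝ, (∀ i, 0 < a i) → (e fun i => Real.log (a i)) = a :=
    fun a ha => funext fun i => Real.exp_log (ha i)
  have hprod_pos : ∀ (j : Fin m) (a : Fin d → ℝ), (∀ i, 0 < a i) → 0 < ∏ i, a i ^ H j i :=
    fun j a ha => Finset.prod_pos fun i _ => Real.rpow_pos_of_pos (ha i) _
  refine ⟨H, fun j a => f a j / ∏ i, a i ^ H j i, fun j i => ?_, fun j a ha => ?_,
    fun j x hx => ?_, fun a ha j => ?_, fun a ha k t ht => ?_⟩
  · -- otherwise the factors `ψ` would blow up along a sequence approaching a face of the orthant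
    have hlim : Tendsto (fun n : ℕ => e (-(n • Pi.single i 1))) atTop
        (𝓝 (Function.update 1 i 0)) := by
      refine tendsto_pi_nhds.2 fun k => ?_
      by_cases hk : k = i
      · subst hk
        simpa [e, -Real.tendsto_exp_comp_nhds_zero, Function.comp_def] using
          Real.tendsto_exp_neg_atTop_nhds_zero.comp (tendsto_natCast_atTop_atTop (R := ℝ))
      · simp [e, hk]
    obtain ⟨M, hM⟩ := (hX1 j).eventually_abs_le
      (hXD j (fun n : ℕ => -(n • Pi.single i 1)) _ (fun k => by
        by_cases hk : k = i
        · subst hk; simp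
        · simp [hk]) hlim)
      (.of_forall fun _ _ => rfl) (hX0 j 1 fun _ => one_pos)
    by_contra! hneg
    have hlim' : Tendsto (fun n : ℕ => (n : ℝ) * -H j i) atTop atTop :=
      tendsto_natCast_atTop_atTop.atTop_mul_const (neg_pos.2 hneg)
    obtain ⟨n, hn, hn'⟩ :=
      (hM.and ((Real.tendsto_exp_atTop.comp hlim').eventually_gt_atTop M)).exists
    rw [hG, map_neg, map_nsmul, nsmul_eq_mul, ← mul_neg, Real.abs_exp] at hn
    exact absurd hn (not_le.2 hn')
  · exact div_pos (hfpos a ha j) (hprod_pos j a ha)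
  · have h := (hψ j fun i => Real.log (x i)).div_const (∏ i, x i ^ H j i)
    rw [he_log x hx, ← hprod j x hx, div_self (hprod_pos j x hx).ne'] at h
    refine h.congr' ?_
    filter_upwards [eventually_atTop_pi_pos] with a ha
    have hmul : ∏ i, (a * x) i ^ H j i = (∏ i, a i ^ H j i) * ∏ i, x i ^ H j i := by
      rw [← Finset.prod_mul_distrib]
      exact Finset.prod_congr rfl fun i _ => Real.mul_rpow (ha i).le (hx i).le
    have h1 := (hprod_pos j a ha).ne'
    have h2 := (hprod_pos j x hx).ne'
    have h3 := (hfpos a ha j).ne'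
    rw [hmul]
    field_simp
  · exact (mul_div_cancel₀ _ (hprod_pos j a ha).ne').symm
  · simp only [fun j => hprod j a ha]
    have h := hss (fun i => Real.log (a i)) k t ht
    rwa [he_log a ha] at h
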